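/- With the notation of the 2D-to-3D lift: v' ∈ ℝ², u' symmetric trace-free 2×2, e := λ_max(v'⊗v'−u'), v̄ = (v'_1,v'_2,0), and ū the 3×3 symmetric trace-free matrix defined by ū_{ij}=u'_{ij}+(1/3)e·δ_{ij} (i,j≤2), ū_{i3}=ū_{3i}=0 for i≤2, ū_{33}=−(2/3)e. Then the 3D generalized energy density e₃(v̄,ū) := (3/2)·λ_max(v̄⊗v̄ − ū) equals the 2D generalized energy density e₂(v',u') := λ_max(v'⊗v' − u'). -/

import Mathlib

/-- The largest eigenvalue of a real symmetric (Hermitian) matrix. -/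
noncomputable def lambdaMax {d : ℕ} [NeZero d] {A : Matrix (Fin d) (Fin d) ℝ}
    (hA : A.IsHermitian) : ℝ := ⨆ i, hA.eigenvalues i

/-- The 3×3 lift of a 2×2 matrix `u` with energy density `e`. -/
noncomputable def liftMat (u : Matrix (Fin 2) (Fin 2) ℝ) (e : ℝ) : Matrix (Fin 3) (Fin 3) ℝ :=
  Matrix.of fun i j =>
    if hi : (i : ℕ) < 2 then
      if hj : (j : ℕ) < 2 then
        u ⟨i, hi⟩ ⟨j, hj⟩ + 1 / 3 * e * (if (i : ℕ) = (j : ℕ) then 1 else 0)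
      else 0
    else if (j : ℕ) < 2 then 0 else -(2 / 3) * e

/-- The lift of a planar vector to a 3-vector with vanishing third component. -/
def liftVec (v : Fin 2 → ℝ) : Fin 3 → ℝ :=
  fun i => if hi : (i : ℕ) < 2 then v ⟨i, hi⟩ else 0

theorem le_lambdaMax {d : ℕ} [NeZero d] {A : Matrix (Fin d) (Fin d) ℝ}
    (hA : A.IsHermitian) (x : Fin d → ℝ) (hx : x ≠ 0) (m : ℝ)
    (h : A.mulVec x = m • x) : m ≤ lambdaMax hA := by
  have hm : m ∈ spectrum ℝ A := by
    rw [← Matrix.spectrum_toLin']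
    apply Module.End.HasEigenvalue.mem_spectrum
    apply Module.End.hasEigenvalue_of_hasEigenvector (x := x)
    rw [Module.End.hasEigenvector_iff, Module.End.mem_eigenspace_iff]
    exact ⟨by simpa using h, hx⟩
  rw [hA.spectrum_real_eq_range_eigenvalues] at hm
  obtain ⟨i, rfl⟩ := hm
  exact le_ciSup (Set.finite_range _).bddAbove i

theorem exists_lambdaMax {d : ℕ} [NeZero d] {A : Matrix (Fin d) (Fin d) ℝ}
    (hA : A.IsHermitian) : ∃ x : Fin d → ℝ, x ≠ 0 ∧ A.mulVec x = lambdaMax hA • x := by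
  obtain ⟨i, hi⟩ := exists_eq_ciSup_of_finite (f := hA.eigenvalues)
  refine ⟨(hA.eigenvectorBasis i).ofLp, ?_, ?_⟩
  · intro h
    apply hA.eigenvectorBasis.orthonormal.ne_zero i
    ext j
    exact congrFun h j
  · rw [hA.mulVec_eigenvectorBasis i, hi]
    rfl

theorem lift_energy_density_eq (v' : Fin 2 → ℝ) (u' : Matrix (Fin 2) (Fin 2) ℝ)
    (hsymm : u'.IsSymm) (htr : u'.trace = 0)
    (hA : (Matrix.vecMulVec v' v' - u').IsHermitian)
    (hB : (Matrix.vecMulVec (liftVec v') (liftVec v') -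
        liftMat u' (lambdaMax hA)).IsHermitian) :
    (3 : ℝ) / 2 * lambdaMax hB = lambdaMax hA := by
  have h1 : 2 / 3 * lambdaMax hA ≤ lambdaMax hB := by
    apply le_lambdaMax hB ![0, 0, 1]
    · intro h
      simpa using congrFun h 2
    · ext i
      fin_cases i <;>
        simp [Matrix.mulVec, dotProduct, Fin.sum_univ_three, Matrix.vecMulVec_apply, liftVec,
          liftMat]
  have h2 : lambdaMax hB ≤ 2 / 3 * lambdaMax hA := by
    obtain ⟨x, hx, hBx⟩ := exists_lambdaMax hB
    generalize lambdaMax hB = b at *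
    have e0 := congrFun hBx 0
    have e1 := congrFun hBx 1
    have e2 := congrFun hBx 2
    simp [Matrix.mulVec, dotProduct, Fin.sum_univ_three, Matrix.vecMulVec_apply, liftVec,
      liftMat] at e0 e1 e2
    by_cases h : x 2 = 0
    · have := le_lambdaMax hA ![x 0, x 1] (by
        intro h'
        apply hx
        have a0 := congrFun h' 0
        have a1 := congrFun h' 1
        simp at a0 a1
        ext i
        fin_cases i <;> simp [a0, a1, h]) (b + 1 / 3 * lambdaMax hA) (by
        ext i
        fin_cases i <;>
          simp [Matrix.mulVec, dotProduct, Fin.sum_univ_two, Matrix.vecMulVec_apply]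
        · linarith
        · linarith)
      linarith
    · rcases e2 with e2 | e2
      · linarith
      · exact absurd e2 h
  linarith
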